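/- There exists a constant C > 0 such that for every integer n ≥ 2 and all compact sets K, T ⊆ ℝⁿ, each with connected boundary and positive volume, satisfying C/√n ≤ (vol(K)/vol(T))^{1/n} ≤ √n/C, one has vol(∂K + ∂T)^{2/n} ≥ vol(K)^{2/n} + vol(T)^{2/n}. -/

import Mathlib

open MeasureTheory Pointwise
open Module Set
open scoped ENNReal

/-!
If `x ∈ K + T` does not lie in `∂K + ∂T`, then `K` meets `x - T` but their connected frontiers are
disjoint, which forces one of the two sets to contain the other; hence `x` lies in a fixed translate
of `K` or of `T`, and `vol (∂K + ∂T) ≥ vol (K + T) - vol K - vol T`. Put `k = vol K ^ (1 / n)` and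
`t = vol T ^ (1 / n)`. The Brunn–Minkowski inequality, obtained here from the Prékopa–Leindler
inequality, bounds the right-hand side below by `(k + t) ^ n - k ^ n - t ^ n`. By Bernoulli's
inequality `(k + t) ^ n ≥ 3 * (k ^ 2 + t ^ 2) ^ (n / 2)` as soon as `k / t + t / k ≤ n / 2`, and
each of `k ^ n` and `t ^ n` is at most `(k ^ 2 + t ^ 2) ^ (n / 2)`.
-/

section LinearlyOrderedGroup

variable {G : Type*} [AddCommGroup G] [LinearOrder G] [IsOrderedAddMonoid G] [TopologicalSpace G]
  [OrderClosedTopology G] [MeasurableSpace G] [OpensMeasurableSpace G] [MeasurableAdd G]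
  (μ : Measure G) [μ.IsAddLeftInvariant] [NullSingletonClass μ] {A B : Set G}

theorem measure_add_measure_le_measure_add_of_isCompact (hA : IsCompact A) (hB : IsCompact B)
    (hA₀ : A.Nonempty) (hB₀ : B.Nonempty) : μ A + μ B ≤ μ (A + B) := by
  obtain ⟨M, hMA, hM⟩ := hA.exists_isGreatest hA₀
  obtain ⟨m, hmB, hm⟩ := hB.exists_isLeast hB₀
  -- the translates of `A` and `B` share only the point `max A + min B`
  have hdisj : AEDisjoint μ (m +ᵥ A) (M +ᵥ B) := by
    refine measure_mono_null (t := {M + m}) ?_ (measure_singleton _)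
    rintro _ ⟨⟨a, ha, rfl⟩, b, hb, hab⟩
    refine le_antisymm ?_ ?_
    · exact (add_le_add_right (hM ha) m).trans_eq (add_comm m M)
    · rw [← hab]
      exact add_le_add_right (hm hb) M
  have hmeas : NullMeasurableSet (M +ᵥ B) μ :=
    (hB.measurableSet.const_vadd M).nullMeasurableSet
  calc μ A + μ B = μ ((m +ᵥ A) ∪ (M +ᵥ B)) := by
        rw [measure_union₀ hmeas hdisj, measure_vadd, measure_vadd]
    _ ≤ μ (A + B) := by
        refine measure_mono (union_subset ?_ (vadd_set_subset_add hMA))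
        rw [add_comm]
        exact vadd_set_subset_add hmB

theorem measure_add_measure_le_measure_add [μ.InnerRegular] (hA : MeasurableSet A)
    (hB : MeasurableSet B) (hA₀ : A.Nonempty) (hB₀ : B.Nonempty) : μ A + μ B ≤ μ (A + B) := by
  obtain ⟨a, ha⟩ := hA₀
  obtain ⟨b, hb⟩ := hB₀
  have compact_le : ∀ K ⊆ A, ∀ L ⊆ B, IsCompact K → IsCompact L → μ K + μ L ≤ μ (A + B) := by
    intro K hKA L hLB hK hL
    calc μ K + μ L ≤ μ (insert a K) + μ (insert b L) := by gcongr <;> exact subset_insert _ _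
      _ ≤ μ (insert a K + insert b L) :=
          measure_add_measure_le_measure_add_of_isCompact μ (hK.insert a) (hL.insert b)
            (insert_nonempty _ _) (insert_nonempty _ _)
      _ ≤ μ (A + B) := by
          gcongr
          exacts [insert_subset ha hKA, insert_subset hb hLB]
  rw [hA.measure_eq_iSup_isCompact, hB.measure_eq_iSup_isCompact]
  simp only [iSup_and']
  exact ENNReal.biSup_add_biSup_le' ⟨∅, empty_subset _, isCompact_empty⟩
    ⟨∅, empty_subset _, isCompact_empty⟩ fun K hK L hL => compact_le K hK.1 L hL.1 hK.2 hL.2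

end LinearlyOrderedGroup

theorem volume_restrict_Ioi_ofReal_lt (c : ℝ≥0∞) :
    volume.restrict (Ioi (0 : ℝ)) {t | ENNReal.ofReal t < c} = c := by
  rw [Measure.restrict_apply (measurableSet_lt (by fun_prop) (by fun_prop))]
  induction c with
  | top => simp
  | coe c =>
    have : {t : ℝ | ENNReal.ofReal t < c} ∩ Ioi 0 = Ioo 0 (c : ℝ) := by
      ext t
      refine and_comm.trans (and_congr_right fun ht : 0 < t => ?_)
      rw [mem_ofPred_eq, ENNReal.ofReal_lt_iff_lt_toReal ht.le ENNReal.coe_ne_top,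
        ENNReal.coe_toReal]
    rw [this, Real.volume_Ioo, sub_zero, ENNReal.ofReal_coe_nnreal]

theorem lintegral_eq_lintegral_measure_ofReal_lt {α : Type*} [MeasurableSpace α] (μ : Measure α)
    [SFinite μ] {f : α → ℝ≥0∞} (hf : Measurable f) :
    ∫⁻ x, f x ∂μ = ∫⁻ t in Ioi (0 : ℝ), μ {x | ENNReal.ofReal t < f x} := by
  have hS : MeasurableSet {p : α × ℝ | ENNReal.ofReal p.2 < f p.1} :=
    measurableSet_lt (by fun_prop) (by fun_prop)
  calc ∫⁻ x, f x ∂μ = ∫⁻ x, volume.restrict (Ioi (0 : ℝ)) {t | ENNReal.ofReal t < f x} ∂μ := by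
        simp only [volume_restrict_Ioi_ofReal_lt]
    _ = μ.prod (volume.restrict (Ioi 0)) {p : α × ℝ | ENNReal.ofReal p.2 < f p.1} :=
        (Measure.prod_apply hS).symm
    _ = ∫⁻ t in Ioi (0 : ℝ), μ {x | ENNReal.ofReal t < f x} := Measure.prod_apply_symm hS

theorem lintegral_eq_iSup_lintegral_min_natCast {α : Type*} [MeasurableSpace α] (μ : Measure α)
    {f : α → ℝ≥0∞} (hf : Measurable f) : ∫⁻ x, f x ∂μ = ⨆ n : ℕ, ∫⁻ x, min (f x) n ∂μ := by
  rw [← lintegral_iSup (fun n => hf.min measurable_const)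
    fun m n hmn x => min_le_min_left _ (by exact_mod_cast hmn)]
  refine lintegral_congr fun x => ?_
  rw [← inf_iSup_eq, ENNReal.iSup_natCast, inf_top_eq]

section ConvexCombination

variable {a b : ℝ}

theorem rpow_mul_rpow_le_ofReal_mul_add_ofReal_mul (ha : 0 < a) (hb : 0 < b) (hab : a + b = 1)
    (x y : ℝ≥0∞) : x ^ a * y ^ b ≤ ENNReal.ofReal a * x + ENNReal.ofReal b * y := by
  have young := ENNReal.young_inequality (x ^ a) (y ^ b) (Real.HolderConjugate.inv_inv ha hb hab)
  simpa only [← ENNReal.rpow_mul, mul_inv_cancel₀ ha.ne', mul_inv_cancel₀ hb.ne', ENNReal.rpow_one,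
    ENNReal.ofReal_inv_of_pos ha, ENNReal.ofReal_inv_of_pos hb, div_eq_mul_inv, inv_inv,
    mul_comm x, mul_comm y] using young

variable {f g h : ℝ → ℝ≥0∞}

theorem ofReal_mul_volume_add_le_volume_superlevel (ha : 0 < a) (hb : 0 < b) (hab : a + b = 1)
    (hf : Measurable f) (hg : Measurable g) (H : ∀ x y, f x ^ a * g y ^ b ≤ h (a • x + b • y))
    {t : ℝ≥0∞} (hft : ∃ x, t < f x) (hgt : ∃ y, t < g y) :
    ENNReal.ofReal a * volume {x | t < f x} + ENNReal.ofReal b * volume {y | t < g y} ≤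
      volume {z | t < h z} := by
  have hmf : MeasurableSet {x | t < f x} := measurableSet_lt measurable_const hf
  have hmg : MeasurableSet {y | t < g y} := measurableSet_lt measurable_const hg
  have hsub : a • {x | t < f x} + b • {y | t < g y} ⊆ {z | t < h z} := by
    rintro _ ⟨_, ⟨x, hx, rfl⟩, _, ⟨y, hy, rfl⟩, rfl⟩
    calc t = t ^ a * t ^ b := by
          rw [← ENNReal.rpow_add_of_nonneg _ _ ha.le hb.le, hab, ENNReal.rpow_one]
      _ < f x ^ a * g y ^ b :=
          ENNReal.mul_lt_mul (ENNReal.rpow_lt_rpow hx ha) (ENNReal.rpow_lt_rpow hy hb)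
      _ ≤ h (a • x + b • y) := H x y
  calc ENNReal.ofReal a * volume {x | t < f x} + ENNReal.ofReal b * volume {y | t < g y}
      = volume (a • {x | t < f x}) + volume (b • {y | t < g y}) := by
        simp only [Measure.addHaar_smul_of_nonneg _ ha.le, Measure.addHaar_smul_of_nonneg _ hb.le,
          finrank_self, pow_one]
    _ ≤ volume (a • {x | t < f x} + b • {y | t < g y}) :=
        measure_add_measure_le_measure_add volume (hmf.const_smul₀ a) (hmg.const_smul₀ b)
          (Nonempty.smul_set hft) (Nonempty.smul_set hgt)
    _ ≤ volume {z | t < h z} := measure_mono hsub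

theorem ofReal_mul_lintegral_add_le_of_iSup_eq (ha : 0 < a) (hb : 0 < b) (hab : a + b = 1)
    (hf : Measurable f) (hg : Measurable g) (hh : Measurable h) (hfg : ⨆ x, f x = ⨆ y, g y)
    (H : ∀ x y, f x ^ a * g y ^ b ≤ h (a • x + b • y)) :
    ENNReal.ofReal a * (∫⁻ x, f x) + ENNReal.ofReal b * ∫⁻ y, g y ≤ ∫⁻ z, h z := by
  have hmeas (u : ℝ → ℝ≥0∞) : Measurable fun t : ℝ => volume {x | ENNReal.ofReal t < u x} :=
    Antitone.measurable fun s t hst => measure_mono fun x hx =>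
      (ENNReal.ofReal_le_ofReal hst).trans_lt hx
  simp only [lintegral_eq_lintegral_measure_ofReal_lt volume, hf, hg, hh]
  rw [← lintegral_const_mul _ (hmeas f), ← lintegral_const_mul _ (hmeas g),
    ← lintegral_add_left ((hmeas f).const_mul _)]
  refine lintegral_mono fun t => ?_
  by_cases ht : ENNReal.ofReal t < ⨆ x, f x
  · exact ofReal_mul_volume_add_le_volume_superlevel ha hb hab hf hg H (lt_iSup_iff.1 ht)
      (lt_iSup_iff.1 (hfg ▸ ht))
  · have hft : {x | ENNReal.ofReal t < f x} = ∅ :=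
      eq_empty_of_forall_notMem fun x hx => ht (lt_iSup_iff.2 ⟨x, hx⟩)
    have hgt : {y | ENNReal.ofReal t < g y} = ∅ :=
      eq_empty_of_forall_notMem fun y hy => ht (hfg ▸ lt_iSup_iff.2 ⟨y, hy⟩)
    simp only [hft, hgt, measure_empty, mul_zero, add_zero, zero_le]

theorem lintegral_rpow_mul_lintegral_rpow_le_of_iSup_ne_top (ha : 0 < a) (hb : 0 < b)
    (hab : a + b = 1) (hf : Measurable f) (hg : Measurable g) (hh : Measurable h)
    (hf_top : ⨆ x, f x ≠ ∞) (hg_top : ⨆ y, g y ≠ ∞)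
    (H : ∀ x y, f x ^ a * g y ^ b ≤ h (a • x + b • y)) :
    (∫⁻ x, f x) ^ a * (∫⁻ y, g y) ^ b ≤ ∫⁻ z, h z := by
  set F := ⨆ x, f x with hF
  set G := ⨆ y, g y with hG
  rcases eq_or_ne F 0 with hF₀ | hF₀
  · simp [ENNReal.iSup_eq_zero.1 (hF ▸ hF₀), ha]
  rcases eq_or_ne G 0 with hG₀ | hG₀
  · simp [ENNReal.iSup_eq_zero.1 (hG ▸ hG₀), hb]
  -- `G * f` and `F * g` have the same supremum
  have factor_scale (u v : ℝ≥0∞) :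
      (G * u) ^ a * (F * v) ^ b = G ^ a * F ^ b * (u ^ a * v ^ b) := by
    rw [ENNReal.mul_rpow_of_nonneg _ _ ha.le, ENNReal.mul_rpow_of_nonneg _ _ hb.le]
    ring
  have scale_ne_zero : G ^ a * F ^ b ≠ 0 := by simp [hF₀, hG₀, hf_top, hg_top]
  have scale_ne_top : G ^ a * F ^ b ≠ ∞ :=
    ENNReal.mul_ne_top (ENNReal.rpow_ne_top_of_nonneg ha.le hg_top)
      (ENNReal.rpow_ne_top_of_nonneg hb.le hf_top)
  refine (ENNReal.mul_le_mul_iff_right scale_ne_zero scale_ne_top).1 ?_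
  calc G ^ a * F ^ b * ((∫⁻ x, f x) ^ a * (∫⁻ y, g y) ^ b)
      = (∫⁻ x, G * f x) ^ a * (∫⁻ y, F * g y) ^ b := by
        rw [lintegral_const_mul _ hf, lintegral_const_mul _ hg, factor_scale]
    _ ≤ ENNReal.ofReal a * (∫⁻ x, G * f x) + ENNReal.ofReal b * ∫⁻ y, F * g y :=
        rpow_mul_rpow_le_ofReal_mul_add_ofReal_mul ha hb hab _ _
    _ ≤ ∫⁻ z, G ^ a * F ^ b * h z := by
        refine ofReal_mul_lintegral_add_le_of_iSup_eq ha hb hab (hf.const_mul G) (hg.const_mul F)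
          (hh.const_mul _) ?_ fun x y => ?_
        · rw [← ENNReal.mul_iSup, ← ENNReal.mul_iSup, mul_comm]
        · rw [factor_scale]
          gcongr
          exact H x y
    _ = G ^ a * F ^ b * ∫⁻ z, h z := lintegral_const_mul _ hh

end ConvexCombination

/-- The Prékopa–Leindler inequality for a measure `μ` on a real vector space: if
`f x ^ a * g y ^ b ≤ h (a • x + b • y)` for all `x` and `y`, where `a + b = 1`, then the integrals
satisfy the corresponding inequality. Stating it for an arbitrary measure makes it an inductive
property under products. -/
def IsPrekopaLeindler {E : Type*} [AddCommGroup E] [Module ℝ E] [MeasurableSpace E]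
    (μ : Measure E) : Prop :=
  ∀ ⦃a b : ℝ⦄, 0 < a → 0 < b → a + b = 1 → ∀ ⦃f g h : E → ℝ≥0∞⦄,
    Measurable f → Measurable g → Measurable h →
    (∀ x y, f x ^ a * g y ^ b ≤ h (a • x + b • y)) →
    (∫⁻ x, f x ∂μ) ^ a * (∫⁻ x, g x ∂μ) ^ b ≤ ∫⁻ x, h x ∂μ

theorem isPrekopaLeindler_volume_real : IsPrekopaLeindler (volume : Measure ℝ) := by
  intro a b ha hb hab f g h hf hg hh H
  have iSup_rpow {r : ℝ} (hr : 0 < r) (u : ℕ → ℝ≥0∞) : (⨆ n, u n) ^ r = ⨆ n, u n ^ r :=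
    (ENNReal.orderIsoRpow r hr).map_iSup u
  have iSup_min_ne_top (u : ℝ → ℝ≥0∞) (n : ℕ) : ⨆ x, min (u x) n ≠ ∞ :=
    ne_top_of_le_ne_top (ENNReal.natCast_ne_top n) (iSup_le fun x => min_le_right _ _)
  rw [lintegral_eq_iSup_lintegral_min_natCast volume hf,
    lintegral_eq_iSup_lintegral_min_natCast volume hg, iSup_rpow ha, iSup_rpow hb]
  simp only [ENNReal.iSup_mul, ENNReal.mul_iSup, iSup_le_iff]
  intro m n
  refine lintegral_rpow_mul_lintegral_rpow_le_of_iSup_ne_top ha hb hab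
    (hf.min measurable_const) (hg.min measurable_const) hh (iSup_min_ne_top f _)
    (iSup_min_ne_top g _) fun x y => le_trans ?_ (H x y)
  gcongr <;> exact min_le_left _ _

namespace IsPrekopaLeindler

section Module

variable {E F : Type*} [AddCommGroup E] [Module ℝ E] [MeasurableSpace E] [AddCommGroup F]
  [Module ℝ F] [MeasurableSpace F] {μ : Measure E} {ν : Measure F}

theorem dirac (x : E) : IsPrekopaLeindler (Measure.dirac x) := by
  intro a b _ _ hab f g h hf hg hh H
  simpa only [lintegral_dirac' _ hf, lintegral_dirac' _ hg, lintegral_dirac' _ hh, ← add_smul, hab,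
    one_smul] using H x x

theorem const_smul (hμ : IsPrekopaLeindler μ) (c : ℝ≥0∞) : IsPrekopaLeindler (c • μ) := by
  intro a b ha hb hab f g h hf hg hh H
  calc (∫⁻ x, f x ∂c • μ) ^ a * (∫⁻ x, g x ∂c • μ) ^ b
      = c ^ a * c ^ b * ((∫⁻ x, f x ∂μ) ^ a * (∫⁻ x, g x ∂μ) ^ b) := by
        simp only [lintegral_smul_measure, smul_eq_mul, ENNReal.mul_rpow_of_nonneg _ _ ha.le,
          ENNReal.mul_rpow_of_nonneg _ _ hb.le]
        ring
    _ = c * ((∫⁻ x, f x ∂μ) ^ a * (∫⁻ x, g x ∂μ) ^ b) := by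
        rw [← ENNReal.rpow_add_of_nonneg _ _ ha.le hb.le, hab, ENNReal.rpow_one]
    _ ≤ c * ∫⁻ x, h x ∂μ := by gcongr; exact hμ ha hb hab hf hg hh H
    _ = ∫⁻ x, h x ∂c • μ := by rw [lintegral_smul_measure, smul_eq_mul]

theorem of_measurePreserving (hμ : IsPrekopaLeindler μ) (e : E →ₗ[ℝ] F)
    (he : MeasurePreserving e μ ν) : IsPrekopaLeindler ν := by
  intro a b ha hb hab f g h hf hg hh H
  rw [← he.lintegral_comp hf, ← he.lintegral_comp hg, ← he.lintegral_comp hh]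
  refine hμ ha hb hab (hf.comp he.measurable) (hg.comp he.measurable) (hh.comp he.measurable)
    fun x y => ?_
  simpa only [map_add, map_smul, Function.comp_apply] using H (e x) (e y)

theorem prod [SFinite ν] (hμ : IsPrekopaLeindler μ) (hν : IsPrekopaLeindler ν) :
    IsPrekopaLeindler (μ.prod ν) := by
  intro a b ha hb hab f g h hf hg hh H
  rw [lintegral_prod _ hf.aemeasurable, lintegral_prod _ hg.aemeasurable,
    lintegral_prod _ hh.aemeasurable]
  refine hμ ha hb hab hf.lintegral_prod_right' hg.lintegral_prod_right' hh.lintegral_prod_right'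
    fun x y => ?_
  exact hν ha hb hab (hf.comp measurable_prodMk_left) (hg.comp measurable_prodMk_left)
    (hh.comp measurable_prodMk_left) fun x' y' => H (x, x') (y, y')

theorem measure_rpow_mul_measure_rpow_le (hμ : IsPrekopaLeindler μ) {a b : ℝ} (ha : 0 < a)
    (hb : 0 < b) (hab : a + b = 1) {A B : Set E} (hA : MeasurableSet A) (hB : MeasurableSet B)
    (hAB : MeasurableSet (a • A + b • B)) : μ A ^ a * μ B ^ b ≤ μ (a • A + b • B) := by
  simp only [← lintegral_indicator_one, hA, hB, hAB]
  refine hμ ha hb hab (measurable_one.indicator hA) (measurable_one.indicator hB)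
    (measurable_one.indicator hAB) fun x y => ?_
  by_cases hx : x ∈ A
  · by_cases hy : y ∈ B
    · have hxy : a • x + b • y ∈ a • A + b • B :=
        add_mem_add (smul_mem_smul_set hx) (smul_mem_smul_set hy)
      simp [hx, hy, hxy]
    · simp [hy, hb]
  · simp [hx, ha]

end Module

theorem pi {n : ℕ} {E : Fin n → Type*} [∀ i, AddCommGroup (E i)] [∀ i, Module ℝ (E i)]
    [∀ i, MeasurableSpace (E i)] {μ : ∀ i, Measure (E i)} [∀ i, SigmaFinite (μ i)]
    (hμ : ∀ i, IsPrekopaLeindler (μ i)) : IsPrekopaLeindler (Measure.pi μ) := by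
  induction n with
  | zero =>
    rw [Measure.pi_of_empty μ 0]
    exact dirac 0
  | succ n ih =>
    have cons_preserving : MeasurePreserving (Fin.consLinearEquiv ℝ E).toLinearMap
        ((μ 0).prod (Measure.pi fun i : Fin n => μ i.succ)) (Measure.pi μ) := by
      have hcons : ⇑(Fin.consLinearEquiv ℝ E).toLinearMap =
          (MeasurableEquiv.piFinSuccAbove E 0).symm := by
        funext p i
        cases i using Fin.cases <;> rfl
      rw [hcons]
      exact (measurePreserving_piFinSuccAbove μ 0).symm
    exact ((hμ 0).prod (ih fun i => hμ i.succ)).of_measurePreserving _ cons_preserving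

end IsPrekopaLeindler

theorem measureReal_le_measureReal_add_of_isCompact {G : Type*} [AddGroup G] [TopologicalSpace G]
    [ContinuousAdd G] [MeasurableSpace G] (μ : Measure G) [μ.IsAddLeftInvariant]
    [IsFiniteMeasureOnCompacts μ] {A B : Set G} (hA : IsCompact A)
    (hB : IsCompact B) (hA₀ : A.Nonempty) : μ.real B ≤ μ.real (A + B) := by
  obtain ⟨a, ha⟩ := hA₀
  calc μ.real B = μ.real (a +ᵥ B) := by simp only [measureReal_def, measure_vadd]
    _ ≤ μ.real (A + B) :=
        measureReal_mono (vadd_set_subset_add ha) (hA.add hB).measure_ne_top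

section BrunnMinkowski

variable {E : Type*} [NormedAddCommGroup E] [NormedSpace ℝ E] [FiniteDimensional ℝ E]
  [MeasurableSpace E] [BorelSpace E] (μ : Measure E) [μ.IsAddHaarMeasure] {A B : Set E}

theorem isPrekopaLeindler_of_isAddHaarMeasure : IsPrekopaLeindler μ := by
  let e : (Fin (finrank ℝ E) → ℝ) ≃L[ℝ] E := ContinuousLinearEquiv.ofFinrankEq (by simp)
  have hmap : IsPrekopaLeindler (volume.map e) :=
    (IsPrekopaLeindler.pi fun _ => isPrekopaLeindler_volume_real).of_measurePreserving
      e.toLinearEquiv.toLinearMap (e.continuous.measurable.measurePreserving volume)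
  rw [Measure.isAddLeftInvariant_eq_smul μ (volume.map e)]
  exact hmap.const_smul _

theorem addHaar_inv_rpow_smul_self [Nontrivial E] (hA₀ : μ A ≠ 0) (hA_top : μ A ≠ ∞) :
    μ ((μ.real A ^ (1 / finrank ℝ E : ℝ))⁻¹ • A) = 1 := by
  have hA_pos : 0 < μ.real A := ENNReal.toReal_pos hA₀ hA_top
  rw [Measure.addHaar_smul_of_nonneg μ (by positivity), inv_pow, one_div,
    Real.rpow_inv_natCast_pow hA_pos.le finrank_pos.ne', ENNReal.ofReal_inv_of_pos hA_pos,
    ofReal_measureReal hA_top, ENNReal.inv_mul_cancel hA₀ hA_top]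

theorem brunn_minkowski_pow_of_pos [Nontrivial E] (hA : IsCompact A)
    (hB : IsCompact B) (hA₀ : 0 < μ A) (hB₀ : 0 < μ B) :
    (μ.real A ^ (1 / finrank ℝ E : ℝ) + μ.real B ^ (1 / finrank ℝ E : ℝ)) ^ finrank ℝ E ≤
      μ.real (A + B) := by
  have hA_pos : 0 < μ.real A := ENNReal.toReal_pos hA₀.ne' hA.measure_ne_top
  have hB_pos : 0 < μ.real B := ENNReal.toReal_pos hB₀.ne' hB.measure_ne_top
  set k := μ.real A ^ (1 / finrank ℝ E : ℝ) with hk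
  set t := μ.real B ^ (1 / finrank ℝ E : ℝ) with ht
  have hk₀ : 0 < k := Real.rpow_pos_of_pos hA_pos _
  have ht₀ : 0 < t := Real.rpow_pos_of_pos hB_pos _
  have combine : (k / (k + t)) • k⁻¹ • A + (t / (k + t)) • t⁻¹ • B = (k + t)⁻¹ • (A + B) := by
    rw [smul_smul, smul_smul, smul_add]
    congr 2 <;> field_simp
  have one_le : 1 ≤ μ ((k + t)⁻¹ • (A + B)) := by
    have := (isPrekopaLeindler_of_isAddHaarMeasure μ).measure_rpow_mul_measure_rpow_le
      (div_pos hk₀ (add_pos hk₀ ht₀)) (div_pos ht₀ (add_pos hk₀ ht₀)) (by field_simp)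
      (hA.measurableSet.const_smul₀ k⁻¹) (hB.measurableSet.const_smul₀ t⁻¹)
      (by rw [combine]; exact (hA.add hB).measurableSet.const_smul₀ _)
    rwa [combine, hk, ht, addHaar_inv_rpow_smul_self μ hA₀.ne' hA.measure_ne_top,
      addHaar_inv_rpow_smul_self μ hB₀.ne' hB.measure_ne_top, ENNReal.one_rpow, ENNReal.one_rpow,
      one_mul, ← hk, ← ht] at this
  rwa [Measure.addHaar_smul_of_nonneg μ (by positivity), inv_pow,
    ← ofReal_measureReal (hA.add hB).measure_ne_top, ← ENNReal.ofReal_mul (by positivity),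
    ENNReal.one_le_ofReal, ← div_eq_inv_mul, one_le_div (by positivity)] at one_le

theorem brunn_minkowski [Nontrivial E] (hA : IsCompact A) (hB : IsCompact B)
    (hA₀ : A.Nonempty) (hB₀ : B.Nonempty) :
    μ.real A ^ (1 / finrank ℝ E : ℝ) + μ.real B ^ (1 / finrank ℝ E : ℝ) ≤
      μ.real (A + B) ^ (1 / finrank ℝ E : ℝ) := by
  have hn : (0 : ℝ) < finrank ℝ E := Nat.cast_pos.2 finrank_pos
  rcases eq_or_ne (μ A) 0 with hμA | hμA
  · rw [measureReal_def μ A, hμA, ENNReal.toReal_zero, Real.zero_rpow (by positivity), zero_add]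
    exact Real.rpow_le_rpow measureReal_nonneg
      (measureReal_le_measureReal_add_of_isCompact μ hA hB hA₀) (by positivity)
  rcases eq_or_ne (μ B) 0 with hμB | hμB
  · rw [measureReal_def μ B, hμB, ENNReal.toReal_zero, Real.zero_rpow (by positivity), add_zero,
      add_comm A]
    exact Real.rpow_le_rpow measureReal_nonneg
      (measureReal_le_measureReal_add_of_isCompact μ hB hA hB₀) (by positivity)
  rw [one_div, Real.le_rpow_inv_iff_of_pos (by positivity) (by positivity) hn, ← one_div,
    Real.rpow_natCast]
  exact brunn_minkowski_pow_of_pos μ hA hB hμA.bot_lt hμB.bot_lt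

end BrunnMinkowski

section ConnectedFrontier

variable {X : Type*} [TopologicalSpace X] {K T : Set X}

theorem frontier_subset_interior_or_subset_compl (hK : IsClosed K)
    (hT : IsPreconnected (frontier T)) (hKT : Disjoint (frontier K) (frontier T)) :
    frontier T ⊆ interior K ∨ frontier T ⊆ Kᶜ := by
  refine hT.subset_or_subset isOpen_interior hK.isOpen_compl
    (disjoint_compl_right.mono_left interior_subset) fun x hx => ?_
  by_cases hxK : x ∈ K
  · exact Or.inl (by_contra fun h => hKT.notMem_of_mem_right hx ⟨subset_closure hxK, h⟩)
  · exact Or.inr hxK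

variable [PreconnectedSpace X] [NoncompactSpace X]

theorem eq_empty_of_subset_isCompact_of_frontier_eq_empty {S : Set X} (hK : IsCompact K)
    (hSK : S ⊆ K) (hS : frontier S = ∅) : S = ∅ := by
  rcases frontier_eq_empty_iff.1 hS with h | rfl
  · exact h
  · exact absurd (univ_subset_iff.1 hSK ▸ hK) (noncompact_univ X)

theorem subset_of_frontier_subset_interior (hT : IsCompact T) (hT_closed : IsClosed T)
    (hTK : frontier T ⊆ interior K) (hKT : frontier K ⊆ Tᶜ) : T ⊆ K := by
  refine sdiff_eq_empty.1
    (eq_empty_of_subset_isCompact_of_frontier_eq_empty hT sdiff_subset (subset_empty_iff.1 ?_))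
  rw [sdiff_eq]
  refine (frontier_inter_subset _ _).trans ?_
  rw [closure_compl, frontier_compl, hT_closed.closure_eq]
  rintro x (⟨hxT, hxK⟩ | ⟨hxT, hxK⟩)
  · exact hxK (hTK hxT)
  · exact hKT hxK hxT

theorem union_eq_empty_of_frontier_subset_interior (hK : IsCompact K) (hT : IsCompact T)
    (hTK : frontier T ⊆ interior K) (hKT : frontier K ⊆ interior T) : K ∪ T = ∅ := by
  refine eq_empty_of_subset_isCompact_of_frontier_eq_empty (hK.union hT) subset_rfl
    (subset_empty_iff.1 ((frontier_union_subset _ _).trans ?_))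
  rw [closure_compl, closure_compl]
  rintro x (⟨hxK, hxT⟩ | ⟨hxK, hxT⟩)
  · exact hxT (hKT hxK)
  · exact hxK (hTK hxT)

theorem disjoint_of_frontier_subset_compl (hK : IsCompact K) (hK_closed : IsClosed K)
    (hT_closed : IsClosed T) (hTK : frontier T ⊆ Kᶜ) (hKT : frontier K ⊆ Tᶜ) : Disjoint K T := by
  refine disjoint_iff_inter_eq_empty.2 <| eq_empty_of_subset_isCompact_of_frontier_eq_empty hK
    inter_subset_left (subset_empty_iff.1 ((frontier_inter_subset _ _).trans ?_))
  rw [hK_closed.closure_eq, hT_closed.closure_eq]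
  rintro x (⟨hxK, hxT⟩ | ⟨hxK, hxT⟩)
  · exact hKT hxK hxT
  · exact hTK hxT hxK

theorem subset_or_subset_or_disjoint_of_disjoint_frontier [T2Space X] (hK : IsCompact K)
    (hT : IsCompact T) (hK' : IsPreconnected (frontier K)) (hT' : IsPreconnected (frontier T))
    (hKT : Disjoint (frontier K) (frontier T)) : T ⊆ K ∨ K ⊆ T ∨ Disjoint K T := by
  rcases frontier_subset_interior_or_subset_compl hK.isClosed hT' hKT with hTK | hTK <;>
    rcases frontier_subset_interior_or_subset_compl hT.isClosed hK' hKT.symm with hKT | hKT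
  · have hempty := union_eq_empty_of_frontier_subset_interior hK hT hTK hKT
    exact Or.inl ((union_empty_iff.1 hempty).2 ▸ empty_subset K)
  · exact Or.inl (subset_of_frontier_subset_interior hT hT.isClosed hTK hKT)
  · exact Or.inr (Or.inl (subset_of_frontier_subset_interior hK hK.isClosed hKT hTK))
  · exact Or.inr (Or.inr (disjoint_of_frontier_subset_compl hK hK.isClosed hT.isClosed hTK hKT))

end ConnectedFrontier

section FrontierSum

variable {G : Type*} [AddCommGroup G] [TopologicalSpace G] [IsTopologicalAddGroup G] [T2Space G]
  [PreconnectedSpace G] [NoncompactSpace G] {K T : Set G}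

-- `x ∈ K + T` says that `K` meets the reflected copy `x - T`, and `x ∈ ∂K + ∂T` that their
-- frontiers meet.
theorem add_subset_frontier_add_frontier_union (hK : IsCompact K) (hT : IsCompact T)
    (hK' : IsPreconnected (frontier K)) (hT' : IsPreconnected (frontier T)) {k t : G} (hk : k ∈ K)
    (ht : t ∈ T) : K + T ⊆ (frontier K + frontier T) ∪ ((t +ᵥ K) ∪ (k +ᵥ T)) := by
  rintro x ⟨p, hp, q, hq, hpq⟩
  refine or_iff_not_imp_left.2 fun hx => ?_
  set T' := Homeomorph.subLeft x ⁻¹' T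
  have mem_T' (z : G) : z ∈ T' ↔ x - z ∈ T := Iff.rfl
  have frontier_T' : frontier T' = Homeomorph.subLeft x ⁻¹' frontier T :=
    ((Homeomorph.subLeft x).preimage_frontier T).symm
  have hdisj : Disjoint (frontier K) (frontier T') := by
    rw [frontier_T', disjoint_left]
    exact fun z hzK hzT => hx ⟨z, hzK, x - z, hzT, add_sub_cancel z x⟩
  rcases subset_or_subset_or_disjoint_of_disjoint_frontier hK
    ((Homeomorph.subLeft x).isCompact_preimage.2 hT) hK'
    (frontier_T' ▸ (Homeomorph.subLeft x).isPreconnected_preimage.2 hT') hdisj with h | h | h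
  · exact Or.inl ⟨x - t, h ((mem_T' _).2 (by rwa [sub_sub_cancel])), add_sub_cancel t x⟩
  · exact Or.inr ⟨x - k, (mem_T' _).1 (h hk), add_sub_cancel k x⟩
  · refine absurd ((mem_T' p).2 ?_) (disjoint_left.1 h hp)
    rwa [← hpq, add_sub_cancel_left]

theorem measure_add_le_measure_frontier_add_frontier [MeasurableSpace G]
    (μ : Measure G) [μ.IsAddLeftInvariant] (hK : IsCompact K) (hT : IsCompact T)
    (hK' : IsPreconnected (frontier K)) (hT' : IsPreconnected (frontier T)) :
    μ (K + T) ≤ μ (frontier K + frontier T) + (μ K + μ T) := by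
  rcases K.eq_empty_or_nonempty with rfl | ⟨k, hk⟩
  · simp
  rcases T.eq_empty_or_nonempty with rfl | ⟨t, ht⟩
  · simp
  calc μ (K + T) ≤ μ ((frontier K + frontier T) ∪ ((t +ᵥ K) ∪ (k +ᵥ T))) :=
        measure_mono (add_subset_frontier_add_frontier_union hK hT hK' hT' hk ht)
    _ ≤ μ (frontier K + frontier T) + (μ (t +ᵥ K) + μ (k +ᵥ T)) :=
        (measure_union_le _ _).trans (by gcongr; exact measure_union_le _ _)
    _ = μ (frontier K + frontier T) + (μ K + μ T) := by rw [measure_vadd, measure_vadd]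

theorem measureReal_add_le_measureReal_frontier_add_frontier [MeasurableSpace G]
    (μ : Measure G) [μ.IsAddLeftInvariant] [IsFiniteMeasureOnCompacts μ] (hK : IsCompact K)
    (hT : IsCompact T) (hK' : IsPreconnected (frontier K)) (hT' : IsPreconnected (frontier T)) :
    μ.real (K + T) ≤ μ.real (frontier K + frontier T) + (μ.real K + μ.real T) := by
  have hfrontier_top : μ (frontier K + frontier T) ≠ ∞ :=
    ((hK.of_isClosed_subset isClosed_frontier hK.isClosed.frontier_subset).add
      (hT.of_isClosed_subset isClosed_frontier hT.isClosed.frontier_subset)).measure_ne_top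
  have hKT_top : μ K + μ T ≠ ∞ := ENNReal.add_ne_top.2 ⟨hK.measure_ne_top, hT.measure_ne_top⟩
  simp only [measureReal_def]
  rw [← ENNReal.toReal_add hK.measure_ne_top hT.measure_ne_top,
    ← ENNReal.toReal_add hfrontier_top hKT_top]
  exact ENNReal.toReal_mono (ENNReal.add_ne_top.2 ⟨hfrontier_top, hKT_top⟩)
    (measure_add_le_measure_frontier_add_frontier μ hK hT hK' hT')

end FrontierSum

section RealInequalities

variable {k t p : ℝ}

-- Bernoulli's inequality for `(k + t) ^ 2 = (k ^ 2 + t ^ 2) * (1 + s)`, where `p / 2 * s ≥ 2`.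
theorem three_mul_sq_add_sq_rpow_le (hk : 0 < k) (ht : 0 < t) (h : k / t + t / k ≤ p / 2) :
    3 * (k ^ 2 + t ^ 2) ^ (p / 2) ≤ (k + t) ^ p := by
  set s := 2 * k * t / (k ^ 2 + t ^ 2) with hs
  have hs₀ : 0 < s := by positivity
  have hps : 2 ≤ p / 2 * s := by
    have : k / t + t / k = 2 / s := by rw [hs]; field_simp
    rwa [← div_le_iff₀ hs₀, ← this]
  have hp : 1 ≤ p / 2 := by
    have : s ≤ 1 := by
      rw [hs, div_le_one (by positivity)]
      linarith [sq_nonneg (k - t)]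
    nlinarith
  calc 3 * (k ^ 2 + t ^ 2) ^ (p / 2) ≤ (1 + p / 2 * s) * (k ^ 2 + t ^ 2) ^ (p / 2) := by
        gcongr
        linarith
    _ ≤ (1 + s) ^ (p / 2) * (k ^ 2 + t ^ 2) ^ (p / 2) := by
        gcongr
        exact one_add_mul_self_le_rpow_one_add (by linarith) hp
    _ = ((k + t) ^ 2) ^ (p / 2) := by
        rw [← Real.mul_rpow (by positivity) (by positivity)]
        congr 1
        rw [hs]
        field_simp
        ring
    _ = (k + t) ^ p := by
        rw [← Real.rpow_natCast_mul (by positivity)]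
        congr 1
        push_cast
        ring

theorem rpow_le_sq_add_sq_rpow (hk : 0 ≤ k) (hp : 0 ≤ p) (t : ℝ) :
    k ^ p ≤ (k ^ 2 + t ^ 2) ^ (p / 2) := by
  calc k ^ p = (k ^ 2) ^ (p / 2) := by
        rw [← Real.rpow_natCast_mul hk]
        congr 1
        push_cast
        ring
    _ ≤ (k ^ 2 + t ^ 2) ^ (p / 2) := by
        gcongr
        exact le_add_of_nonneg_right (sq_nonneg t)

theorem sq_add_sq_rpow_add_le_add_rpow (hk : 0 < k) (ht : 0 < t) (h : k / t + t / k ≤ p / 2) :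
    (k ^ 2 + t ^ 2) ^ (p / 2) + (k ^ p + t ^ p) ≤ (k + t) ^ p := by
  have hp : 0 ≤ p := by
    have : 0 < k / t + t / k := by positivity
    linarith
  have hk_le := rpow_le_sq_add_sq_rpow hk.le hp t
  have ht_le := rpow_le_sq_add_sq_rpow ht.le hp k
  rw [add_comm (t ^ 2)] at ht_le
  linarith [three_mul_sq_add_sq_rpow_le hk ht h]

theorem rpow_two_div_add_le_of_add_le {x y v p : ℝ} (hx : 0 < x) (hy : 0 < y) (hv : 0 ≤ v)
    (h : (x / y) ^ (1 / p) + (y / x) ^ (1 / p) ≤ p / 2)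
    (hv_le : (x ^ (1 / p) + y ^ (1 / p)) ^ p ≤ v + (x + y)) :
    x ^ (2 / p) + y ^ (2 / p) ≤ v ^ (2 / p) := by
  have hp : 0 < p := by
    have : 0 < (x / y) ^ (1 / p) + (y / x) ^ (1 / p) := by positivity
    linarith
  have rpow_one_div_sq {z : ℝ} (hz : 0 < z) : (z ^ (1 / p)) ^ 2 = z ^ (2 / p) := by
    rw [← Real.rpow_mul_natCast hz.le]
    congr 1
    push_cast
    ring
  rw [Real.div_rpow hx.le hy.le, Real.div_rpow hy.le hx.le] at h
  have key := (sq_add_sq_rpow_add_le_add_rpow (by positivity) (by positivity) h).trans hv_le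
  rw [rpow_one_div_sq hx, rpow_one_div_sq hy, one_div, Real.rpow_inv_rpow hx.le hp.ne',
    Real.rpow_inv_rpow hy.le hp.ne', add_le_add_iff_right] at key
  rwa [← inv_div p 2, Real.le_rpow_inv_iff_of_pos (by positivity) hv (by positivity), inv_div]

theorem add_inv_le_half_of_mem_Icc_sqrt {r p : ℝ} (hp : 1 ≤ p) (h₁ : 4 / √p ≤ r)
    (h₂ : r ≤ √p / 4) : r + r⁻¹ ≤ p / 2 := by
  have hsqrt : 1 ≤ √p := Real.one_le_sqrt.2 hp
  have hinv : r⁻¹ ≤ √p / 4 := by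
    rw [← inv_div]
    exact inv_anti₀ (by positivity) h₁
  have hsq : √p * √p = p := Real.mul_self_sqrt (by linarith)
  nlinarith

end RealInequalities

theorem restricted_BM_for_boundaries_general {E : Type*} [NormedAddCommGroup E] [NormedSpace ℝ E]
    [FiniteDimensional ℝ E] [MeasurableSpace E] [BorelSpace E] (μ : Measure E)
    [μ.IsAddHaarMeasure] {K T : Set E} (hK : IsCompact K) (hT : IsCompact T)
    (hK' : IsPreconnected (frontier K)) (hT' : IsPreconnected (frontier T)) (hK₀ : 0 < μ K)
    (hT₀ : 0 < μ T)
    (hKT : (μ.real K / μ.real T) ^ (1 / finrank ℝ E : ℝ) +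
      (μ.real T / μ.real K) ^ (1 / finrank ℝ E : ℝ) ≤ finrank ℝ E / 2) :
    μ.real K ^ (2 / finrank ℝ E : ℝ) + μ.real T ^ (2 / finrank ℝ E : ℝ) ≤
      μ.real (frontier K + frontier T) ^ (2 / finrank ℝ E : ℝ) := by
  have hK_pos : 0 < μ.real K := ENNReal.toReal_pos hK₀.ne' hK.measure_ne_top
  have hT_pos : 0 < μ.real T := ENNReal.toReal_pos hT₀.ne' hT.measure_ne_top
  have hn : (0 : ℝ) < finrank ℝ E := by
    have := add_pos (Real.rpow_pos_of_pos (div_pos hK_pos hT_pos) (1 / finrank ℝ E))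
      (Real.rpow_pos_of_pos (div_pos hT_pos hK_pos) (1 / finrank ℝ E))
    linarith
  have : Nontrivial E := nontrivial_of_finrank_pos (Nat.cast_pos.1 hn)
  have : NoncompactSpace E := NormedSpace.noncompactSpace ℝ E
  have add_rpow_le := brunn_minkowski μ hK hT
    (nonempty_of_measure_ne_zero hK₀.ne') (nonempty_of_measure_ne_zero hT₀.ne')
  rw [one_div, Real.le_rpow_inv_iff_of_pos (by positivity) (by positivity) hn, ← one_div]
    at add_rpow_le
  exact rpow_two_div_add_le_of_add_le hK_pos hT_pos measureReal_nonneg hKT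
    (add_rpow_le.trans
      (measureReal_add_le_measureReal_frontier_add_frontier μ hK hT hK' hT'))

theorem restricted_BM_for_boundaries :
    ∃ C : ℝ, 0 < C ∧ ∀ n : ℕ, 2 ≤ n →
      ∀ K T : Set (EuclideanSpace ℝ (Fin n)),
        IsCompact K → IsCompact T →
        IsConnected (frontier K) → IsConnected (frontier T) →
        0 < volume K → 0 < volume T →
        C / Real.sqrt n ≤ ((volume K).toReal / (volume T).toReal) ^ ((1 : ℝ) / n) →
        ((volume K).toReal / (volume T).toReal) ^ ((1 : ℝ) / n) ≤ Real.sqrt n / C →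
        (volume (frontier K + frontier T)).toReal ^ ((2 : ℝ) / n) ≥
          (volume K).toReal ^ ((2 : ℝ) / n) + (volume T).toReal ^ ((2 : ℝ) / n) := by
  refine ⟨4, four_pos, fun n hn K T hK hT hK' hT' hK₀ hT₀ h₁ h₂ => ?_⟩
  have hratio := add_inv_le_half_of_mem_Icc_sqrt (Nat.one_le_cast.2 (by lia)) h₁ h₂
  rw [← Real.inv_rpow (by positivity), inv_div] at hratio
  have hgeneral := restricted_BM_for_boundaries_general volume hK hT hK'.isPreconnected
    hT'.isPreconnected hK₀ hT₀
  simp only [finrank_euclideanSpace_fin, measureReal_def] at hgeneral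
  exact hgeneral hratio
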